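/- arXiv:2211.14529 — 2 statements merged into one kernel-verified Lean document; each statement's English description precedes it below -/
import Mathlib

section
/- Fix an integer n ≥ 1 and a real c > 0. Let f : (a, +∞) → (0, π/(2c)) be a C² solution of the type II Grim Reaper ODE, for some a ∈ ℝ ∪ {−∞}. Then the limit of f(s) as s → +∞ exists and equals either 0 or π/(2c). Likewise, if f is a solution defined on (−∞, a), then the limit of f(s) as s → −∞ exists and equals either 0 or π/(2c). -/
open Real Set Filter Topology

/-- The type II warping function `b_II(y) = n·c·tan(c·y)`. -/
noncomputable def bII (n : ℕ) (c : ℝ) : ℝ → ℝ := fun y => (n : ℝ) * c * Real.tan (c * y)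

/-- `f` is a `C²` solution of the type II Grim Reaper ODE on `L`, with values in
`I_II = (0, π/(2c))`. -/
def IsGrimReaperSolII (n : ℕ) (c : ℝ) (f : ℝ → ℝ) (L : Set ℝ) : Prop :=
  (∀ s ∈ L, f s ∈ Set.Ioo 0 (π / (2 * c))) ∧
  ContDiffOn ℝ 2 f L ∧
  ∀ s ∈ L,
    deriv (deriv f) s =
      (1 - (deriv f s) ^ 2 / (bII n c (f s)) ^ 2) * bII n c (f s) * (-(c ^ 2 * (n : ℝ) ^ 2))
        + (deriv (bII n c) (f s) / bII n c (f s)) * (deriv f s) ^ 2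

/-!
Let `φ` be a primitive of `1 / b_II`. Along a solution, `g = φ ∘ f` satisfies `g'' = d (1 - g'²)`
with `d = d_II`, an equation which the substitution `w = exp (d g)` makes linear: `w'' = d² w`.
On `I_II` one has `φ ≤ 0`, so `w ≥ 1` and `w'' ≥ d² > 0`; hence `w → ∞`, that is `φ ∘ f → -∞`, and
this forces `f → 0`. The equation is invariant under `s ↦ -s`, which gives the limit at `-∞`.
-/

lemma tendsto_atTop_of_le_deriv {w : ℝ → ℝ} {m : ℝ} (hm : 0 < m)
    (h : ∀ᶠ s in atTop, m ≤ deriv w s) : Tendsto w atTop atTop := by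
  obtain ⟨r, hr⟩ := eventually_atTop.1 h
  have hdiff (s : ℝ) (hs : r ≤ s) : DifferentiableAt ℝ w s :=
    differentiableAt_of_deriv_ne_zero (hm.trans_le (hr s hs)).ne'
  have hlinear (s : ℝ) (hs : r ≤ s) : m * (s - r) ≤ w s - w r :=
    (convex_Ici r).mul_sub_le_image_sub_of_le_deriv
      (fun x hx ↦ (hdiff x hx).continuousAt.continuousWithinAt)
      (fun x hx ↦ (hdiff x (interior_subset hx)).differentiableWithinAt)
      (fun x hx ↦ hr x (interior_subset hx)) r self_mem_Ici s hs hs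
  have hlower : Tendsto (fun s ↦ m * (s - r) + w r) atTop atTop :=
    tendsto_atTop_add_const_right _ _
      ((tendsto_atTop_add_const_right _ (-r) tendsto_id).const_mul_atTop hm)
  refine tendsto_atTop_mono' _ ?_ hlower
  filter_upwards [eventually_ge_atTop r] with s hs
  linarith [hlinear s hs]

lemma tendsto_atTop_of_le_deriv_deriv {w : ℝ → ℝ} {m : ℝ} (hm : 0 < m)
    (h : ∀ᶠ s in atTop, m ≤ deriv (deriv w) s) : Tendsto w atTop atTop :=
  tendsto_atTop_of_le_deriv one_pos
    ((tendsto_atTop_of_le_deriv hm h).eventually_ge_atTop 1)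

lemma deriv_deriv_exp_mul_primitive_comp {b φ f : ℝ → ℝ} {d s : ℝ}
    (hφ : ∀ᶠ y in 𝓝 (f s), HasDerivAt φ (b y)⁻¹ y) (hb : DifferentiableAt ℝ b (f s))
    (hb₀ : b (f s) ≠ 0) (hf : ContDiffAt ℝ 2 f s)
    (hode : deriv (deriv f) s = (1 - deriv f s ^ 2 / b (f s) ^ 2) * b (f s) * d
      + deriv b (f s) / b (f s) * deriv f s ^ 2) :
    deriv (deriv fun t ↦ exp (d * φ (f t))) s = d ^ 2 * exp (d * φ (f s)) := by
  have hw {t : ℝ} (hφt : HasDerivAt φ (b (f t))⁻¹ (f t)) (hft : DifferentiableAt ℝ f t) :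
      HasDerivAt (fun t ↦ exp (d * φ (f t)))
        (exp (d * φ (f t)) * (d * ((b (f t))⁻¹ * deriv f t))) t :=
    ((hφt.comp t hft.hasDerivAt).const_mul d).exp
  have hfs : DifferentiableAt ℝ f s := hf.differentiableAt two_ne_zero
  have hderiv : deriv (fun t ↦ exp (d * φ (f t))) =ᶠ[𝓝 s]
      fun t ↦ exp (d * φ (f t)) * (d * ((b (f t))⁻¹ * deriv f t)) := by
    filter_upwards [hfs.continuousAt.eventually hφ, hf.eventually (by simp)] with t hφt hft
    exact (hw hφt (hft.differentiableAt two_ne_zero)).deriv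
  have hf' : HasDerivAt (deriv f) (deriv (deriv f) s) s :=
    ((hf.derivWithin (m := 1) one_add_one_eq_two.le).differentiableAt one_ne_zero).hasDerivAt
  have hbf : HasDerivAt (fun t ↦ b (f t)) (deriv b (f s) * deriv f s) s :=
    hb.hasDerivAt.comp s hfs.hasDerivAt
  rw [hderiv.deriv_eq, ((hw hφ.self_of_nhds hfs).fun_mul
    (((hbf.fun_inv hb₀).fun_mul hf').const_mul d)).deriv, hode]
  field_simp
  ring

/-- The primitive of `1 / b_II` on `I_II` that vanishes at the right endpoint `π/(2c)`;
composing a solution with it removes `b_II` from the ODE. -/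
noncomputable def primitiveInvBII (n : ℕ) (c y : ℝ) : ℝ := log (sin (c * y)) / (n * c ^ 2)

section TypeII

variable {n : ℕ} {c y : ℝ}

lemma mul_mem_Ioo_zero_pi_div_two (hc : 0 < c) (hy : y ∈ Ioo 0 (π / (2 * c))) :
    c * y ∈ Ioo 0 (π / 2) := by
  refine ⟨mul_pos hc hy.1, ?_⟩
  calc c * y < c * (π / (2 * c)) := mul_lt_mul_of_pos_left hy.2 hc
    _ = π / 2 := by field_simp

lemma sin_mul_pos_of_mem_Ioo (hc : 0 < c) (hy : y ∈ Ioo 0 (π / (2 * c))) : 0 < sin (c * y) :=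
  have hcy := mul_mem_Ioo_zero_pi_div_two hc hy
  sin_pos_of_pos_of_lt_pi hcy.1 (hcy.2.trans (half_lt_self pi_pos))

lemma cos_mul_pos_of_mem_Ioo (hc : 0 < c) (hy : y ∈ Ioo 0 (π / (2 * c))) : 0 < cos (c * y) :=
  have hcy := mul_mem_Ioo_zero_pi_div_two hc hy
  cos_pos_of_mem_Ioo ⟨(neg_neg_of_pos (half_pos pi_pos)).trans hcy.1, hcy.2⟩

lemma differentiableAt_bII (hy : cos (c * y) ≠ 0) : DifferentiableAt ℝ (bII n c) y :=
  ((differentiableAt_tan.2 hy).comp y (differentiableAt_id.const_mul c)).const_mul _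

lemma bII_pos (hn : 0 < n) (hc : 0 < c) (hy : y ∈ Ioo 0 (π / (2 * c))) : 0 < bII n c y :=
  have hcy := mul_mem_Ioo_zero_pi_div_two hc hy
  mul_pos (mul_pos (Nat.cast_pos.2 hn) hc) (tan_pos_of_pos_of_lt_pi_div_two hcy.1 hcy.2)

lemma hasDerivAt_primitiveInvBII (hy : sin (c * y) ≠ 0) :
    HasDerivAt (primitiveInvBII n c) (bII n c y)⁻¹ y := by
  have hlog := (((hasDerivAt_id y).const_mul c).sin.log hy).div_const (n * c ^ 2)
  refine hlog.congr_deriv ?_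
  simp only [bII, tan_eq_sin_div_cos, id_eq]
  field_simp

lemma primitiveInvBII_nonpos (hy : 0 ≤ sin (c * y)) : primitiveInvBII n c y ≤ 0 :=
  div_nonpos_of_nonpos_of_nonneg (log_nonpos hy (sin_le_one _)) (by positivity)

lemma arcsin_exp_primitiveInvBII_div (hn : 0 < n) (hc : 0 < c) (hy : y ∈ Ioo 0 (π / (2 * c))) :
    arcsin (exp (n * c ^ 2 * primitiveInvBII n c y)) / c = y := by
  have hcy := mul_mem_Ioo_zero_pi_div_two hc hy
  rw [primitiveInvBII, mul_div_cancel₀ _ (by positivity), exp_log (sin_mul_pos_of_mem_Ioo hc hy),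
    arcsin_sin (by linarith [hcy.1, pi_pos]) hcy.2.le, mul_div_cancel_left₀ _ hc.ne']

lemma tendsto_zero_of_tendsto_primitiveInvBII_atBot {α : Type*} {l : Filter α} {f : α → ℝ}
    (hn : 0 < n) (hc : 0 < c) (hf : ∀ᶠ s in l, f s ∈ Ioo 0 (π / (2 * c)))
    (h : Tendsto (fun s ↦ primitiveInvBII n c (f s)) l atBot) : Tendsto f l (𝓝 0) := by
  have hexp : Tendsto (fun s ↦ exp (n * c ^ 2 * primitiveInvBII n c (f s))) l (𝓝 0) :=
    tendsto_exp_atBot.comp (h.const_mul_atBot (by positivity))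
  have harcsin := ((continuous_arcsin.tendsto 0).comp hexp).div_const c
  rw [arcsin_zero, zero_div] at harcsin
  refine harcsin.congr' ?_
  filter_upwards [hf] with s hs
  exact arcsin_exp_primitiveInvBII_div hn hc hs

end TypeII

namespace IsGrimReaperSolII

variable {n : ℕ} {c : ℝ} {f : ℝ → ℝ} {L : Set ℝ}

lemma comp_neg (h : IsGrimReaperSolII n c f L) :
    IsGrimReaperSolII n c (fun s ↦ f (-s)) (Neg.neg ⁻¹' L) := by
  obtain ⟨hrange, hsmooth, hode⟩ := h
  have hderiv : deriv (fun s ↦ f (-s)) = fun s ↦ -deriv f (-s) := funext (deriv_comp_neg f)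
  have hderiv₂ (s : ℝ) : deriv (deriv fun s ↦ f (-s)) s = deriv (deriv f) (-s) := by
    rw [hderiv, deriv.fun_neg, deriv_comp_neg, neg_neg]
  refine ⟨fun s hs ↦ hrange (-s) hs, hsmooth.comp contDiff_neg.contDiffOn fun s hs ↦ hs,
    fun s hs ↦ ?_⟩
  rw [hderiv₂, hderiv, neg_sq]
  exact hode (-s) hs

lemma deriv_deriv_exp_primitiveInvBII (hn : 0 < n) (hc : 0 < c) (h : IsGrimReaperSolII n c f L)
    {s : ℝ} (hs : L ∈ 𝓝 s) :
    deriv (deriv fun t ↦ exp (-(c ^ 2 * n ^ 2) * primitiveInvBII n c (f t))) s =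
      (-(c ^ 2 * n ^ 2)) ^ 2 * exp (-(c ^ 2 * n ^ 2) * primitiveInvBII n c (f s)) := by
  obtain ⟨hrange, hsmooth, hode⟩ := h
  have hsL : s ∈ L := mem_of_mem_nhds hs
  have hfs := hrange s hsL
  refine deriv_deriv_exp_mul_primitive_comp ?_
    (differentiableAt_bII (cos_mul_pos_of_mem_Ioo hc hfs).ne') (bII_pos hn hc hfs).ne'
    (hsmooth.contDiffAt hs) (hode s hsL)
  filter_upwards [isOpen_Ioo.mem_nhds hfs] with y hy
  exact hasDerivAt_primitiveInvBII (sin_mul_pos_of_mem_Ioo hc hy).ne'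

lemma tendsto_atTop_zero (hn : 0 < n) (hc : 0 < c) (h : IsGrimReaperSolII n c f L)
    (hL : L ∈ atTop) : Tendsto f atTop (𝓝 0) := by
  obtain ⟨r, hr⟩ := mem_atTop_sets.1 hL
  have hd : -(c ^ 2 * (n : ℝ) ^ 2) < 0 := neg_neg_of_pos (by positivity)
  have hconvex : ∀ᶠ s in atTop, (-(c ^ 2 * n ^ 2)) ^ 2 ≤
      deriv (deriv fun t ↦ exp (-(c ^ 2 * n ^ 2) * primitiveInvBII n c (f t))) s := by
    filter_upwards [eventually_gt_atTop r] with s hs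
    rw [h.deriv_deriv_exp_primitiveInvBII hn hc (mem_of_superset (Ici_mem_nhds hs) hr)]
    have hφ : primitiveInvBII n c (f s) ≤ 0 :=
      primitiveInvBII_nonpos (sin_mul_pos_of_mem_Ioo hc (h.1 s (hr s hs.le))).le
    exact le_mul_of_one_le_right (sq_nonneg _)
      (one_le_exp (mul_nonneg_of_nonpos_of_nonpos hd.le hφ))
  have hexp := tendsto_atTop_of_le_deriv_deriv (sq_pos_of_neg hd) hconvex
  have hφ : Tendsto (fun s ↦ primitiveInvBII n c (f s)) atTop atBot :=
    (tendsto_const_mul_atTop_of_neg hd).1 (tendsto_exp_comp_atTop.1 hexp)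
  exact tendsto_zero_of_tendsto_primitiveInvBII_atBot hn hc (mem_of_superset hL h.1) hφ

lemma tendsto_atBot_zero (hn : 0 < n) (hc : 0 < c) (h : IsGrimReaperSolII n c f L)
    (hL : L ∈ atBot) : Tendsto f atBot (𝓝 0) := by
  have hreflected := h.comp_neg.tendsto_atTop_zero hn hc (tendsto_neg_atTop_atBot hL)
  simpa only [Function.comp_def, neg_neg] using hreflected.comp tendsto_neg_atBot_atTop

end IsGrimReaperSolII

theorem grimReaperII_limit_at_infinity_general {n : ℕ} (hn : 0 < n) {c : ℝ} (hc : 0 < c)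
    {f : ℝ → ℝ} {L : Set ℝ} (h : IsGrimReaperSolII n c f L) :
    (L ∈ atTop → Tendsto f atTop (𝓝 0)) ∧ (L ∈ atBot → Tendsto f atBot (𝓝 0)) :=
  ⟨h.tendsto_atTop_zero hn hc, h.tendsto_atBot_zero hn hc⟩

/-- A solution of the type II Grim Reaper ODE defined on `(a, +∞)`
(with `a ∈ ℝ ∪ {-∞}`) has a limit at `+∞`, which is `0` or `π/(2c)`; likewise at `-∞`
for a solution defined on `(-∞, a)`. -/
theorem grimReaperII_limit_at_infinity (n : ℕ) (hn : 1 ≤ n) (c : ℝ) (hc : 0 < c) :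
    (∀ (a : EReal), a ≠ ⊤ → ∀ f : ℝ → ℝ,
      IsGrimReaperSolII n c f {s : ℝ | a < (s : EReal)} →
      Filter.Tendsto f Filter.atTop (𝓝 0) ∨
        Filter.Tendsto f Filter.atTop (𝓝 (π / (2 * c)))) ∧
    (∀ (a : EReal), a ≠ ⊥ → ∀ f : ℝ → ℝ,
      IsGrimReaperSolII n c f {s : ℝ | (s : EReal) < a} →
      Filter.Tendsto f Filter.atBot (𝓝 0) ∨
        Filter.Tendsto f Filter.atBot (𝓝 (π / (2 * c)))) := by
  exact ⟨fun a ha f h ↦ .inl <| (grimReaperII_limit_at_infinity_general hn hc h).1 <|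
      EReal.tendsto_coe_atTop.eventually_const_lt ha.lt_top,
    fun a ha f h ↦ .inl <| (grimReaperII_limit_at_infinity_general hn hc h).2 <|
      EReal.tendsto_coe_atBot.eventually_lt_const ha.bot_lt⟩
end

section
/- Fix an integer n ≥ 1 and a real c > 0. Let f : (a, +∞) → (−∞, 0) be a C² solution of the type III Grim Reaper ODE, for some a ∈ ℝ ∪ {−∞}. Then either f(s) tends to 0 as s → +∞, or f(s) tends to −∞ as s → +∞. Likewise, if f is a solution defined on (−∞, a), then as s → −∞, f(s) tends either to 0 or to −∞. -/
open Real Set Filter Topology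

/-- The type III warping function `b_III(y) = -n·c·tanh(c·y)`. -/
noncomputable def bIII (n : ℕ) (c : ℝ) : ℝ → ℝ := fun y => -((n : ℝ) * c * Real.tanh (c * y))

/-- `f` is a `C²` solution of the type III Grim Reaper ODE on `L`, with values in
`I_III = (-∞, 0)`. -/
def IsGrimReaperSolIII (n : ℕ) (c : ℝ) (f : ℝ → ℝ) (L : Set ℝ) : Prop :=
  (∀ s ∈ L, f s ∈ Set.Iio (0 : ℝ)) ∧
  ContDiffOn ℝ 2 f L ∧
  ∀ s ∈ L,
    deriv (deriv f) s =
      (1 - (deriv f s) ^ 2 / (bIII n c (f s)) ^ 2) * bIII n c (f s) * (c ^ 2 * (n : ℝ) ^ 2)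
        + (deriv (bIII n c) (f s) / bIII n c (f s)) * (deriv f s) ^ 2

/-!
If `φ' = d φ / b`, then along a solution `f` of the Grim Reaper ODE with warping function `b` the
pair `u = φ ∘ f`, `v = (φ ∘ f) f' / (b ∘ f)` satisfies the linear system `u' = d v`, `v' = d u`.
Hence `u` is a combination of `exp (d s)` and `exp (-d s)`, and as `s → ∞` it tends to `0` or
to `±∞`. For `b_III` and `d = c² n²` one can take `φ y = sinh (-c y) ^ (-n)`, which increases from
`0` to `∞` on `(-∞, 0)`, so that `f → -∞` where `u → 0` and `f → 0` where `u → ∞`. The behaviour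
at `-∞` follows since the ODE is invariant under `s ↦ -s`.
-/

section LinearSystem

theorem exists_eqOn_exp_smul {E : Type*} [NormedAddCommGroup E] [NormedSpace ℝ E] {p : ℝ → E}
    {r : ℝ} {U : Set ℝ} (hU : IsOpen U) (hU' : IsPreconnected U)
    (hp : ∀ s ∈ U, HasDerivAt p (r • p s) s) :
    ∃ A : E, EqOn p (fun s => Real.exp (r * s) • A) U := by
  have hderiv : ∀ s ∈ U, HasDerivAt (fun t => Real.exp (-(r * t)) • p t) 0 s := fun s hs => by
    have hexp : HasDerivAt (fun t => Real.exp (-(r * t))) (Real.exp (-(r * s)) * -r) s := by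
      simpa using ((hasDerivAt_id s).const_mul r).neg.exp
    refine (hexp.smul (hp s hs)).congr_deriv ?_
    module
  obtain ⟨A, hA⟩ := hU.exists_is_const_of_deriv_eq_zero hU'
    (fun s hs => (hderiv s hs).differentiableAt.differentiableWithinAt)
    (fun s hs => (hderiv s hs).deriv)
  refine ⟨A, fun s hs => ?_⟩
  simp only [← hA s hs, smul_smul, ← Real.exp_add, add_neg_cancel, Real.exp_zero, one_smul]

variable {u v : ℝ → ℝ} {d : ℝ}

theorem exists_eventuallyEq_exp_add_exp_neg
    (hu : ∀ᶠ s in atTop, HasDerivAt u (d * v s) s)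
    (hv : ∀ᶠ s in atTop, HasDerivAt v (d * u s) s) :
    ∃ A B : ℝ, u =ᶠ[atTop] fun s => A * Real.exp (d * s) + B * Real.exp (-(d * s)) := by
  obtain ⟨a, ha⟩ := eventually_atTop.1 (hu.and hv)
  have hderiv : ∀ s ∈ Ioi a, HasDerivAt u (d * v s) s ∧ HasDerivAt v (d * u s) s :=
    fun s hs => ha s hs.le
  obtain ⟨A, hA⟩ := exists_eqOn_exp_smul (p := u + v) (r := d) isOpen_Ioi isPreconnected_Ioi
    fun s hs => ((hderiv s hs).1.add (hderiv s hs).2).congr_deriv <| by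
      simp only [Pi.add_apply, smul_eq_mul]; ring
  obtain ⟨B, hB⟩ := exists_eqOn_exp_smul (p := u - v) (r := -d) isOpen_Ioi isPreconnected_Ioi
    fun s hs => ((hderiv s hs).1.sub (hderiv s hs).2).congr_deriv <| by
      simp only [Pi.sub_apply, smul_eq_mul]; ring
  refine ⟨A / 2, B / 2, ?_⟩
  filter_upwards [Ioi_mem_atTop a] with s hs
  have hadd := hA hs
  have hsub := hB hs
  simp only [Pi.add_apply, Pi.sub_apply, smul_eq_mul, neg_mul] at hadd hsub
  linarith

theorem tendsto_atBot_or_zero_or_atTop_of_hasDerivAt (hd : 0 < d)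
    (hu : ∀ᶠ s in atTop, HasDerivAt u (d * v s) s)
    (hv : ∀ᶠ s in atTop, HasDerivAt v (d * u s) s) :
    Tendsto u atTop atBot ∨ Tendsto u atTop (𝓝 0) ∨ Tendsto u atTop atTop := by
  obtain ⟨A, B, hAB⟩ := exists_eventuallyEq_exp_add_exp_neg hu hv
  have hlin : Tendsto (fun s => d * s) atTop atTop := tendsto_id.const_mul_atTop hd
  have hgrow : Tendsto (fun s => Real.exp (d * s)) atTop atTop := Real.tendsto_exp_atTop.comp hlin
  have hdecay : Tendsto (fun s => B * Real.exp (-(d * s))) atTop (𝓝 0) := by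
    simpa only [mul_zero, Function.comp_def] using
      (Real.tendsto_exp_neg_atTop_nhds_zero.comp hlin).const_mul B
  rw [tendsto_congr' hAB, tendsto_congr' hAB, tendsto_congr' hAB]
  rcases lt_trichotomy A 0 with hA | rfl | hA
  · exact Or.inl ((hgrow.const_mul_atTop_of_neg hA).atBot_add hdecay)
  · exact Or.inr (Or.inl (by simpa only [zero_mul, zero_add] using hdecay))
  · exact Or.inr (Or.inr ((hgrow.const_mul_atTop hA).atTop_add hdecay))

end LinearSystem

section MonotoneReflection

variable {α β γ : Type*} [LinearOrder β] [LinearOrder γ] {l : Filter α} {f : α → β}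
  {φ : β → γ} {b : β}

theorem tendsto_atBot_of_tendsto_monotoneOn_comp [NoMinOrder β] [TopologicalSpace γ]
    [OrderTopology γ] {e : γ} (hφ : MonotoneOn φ (Iio b)) (he : ∀ y < b, e < φ y)
    (hf : ∀ᶠ x in l, f x < b) (h : Tendsto (φ ∘ f) l (𝓝 e)) : Tendsto f l atBot := by
  refine tendsto_atBot.2 fun M => ?_
  obtain ⟨m, hm⟩ := exists_lt (min M b)
  obtain ⟨hmM, hmb⟩ := lt_min_iff.1 hm
  filter_upwards [hf, h.eventually_lt_const (he m hmb)] with x hxb hx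
  exact ((hφ.reflect_lt hxb hmb hx).trans hmM).le

theorem tendsto_nhds_of_tendsto_monotoneOn_comp_atTop [TopologicalSpace β] [OrderTopology β]
    [NoMaxOrder γ] (hφ : MonotoneOn φ (Iio b)) (hf : ∀ᶠ x in l, f x < b)
    (h : Tendsto (φ ∘ f) l atTop) : Tendsto f l (𝓝 b) := by
  refine tendsto_order.2 ⟨fun y hy => ?_, fun y hy => hf.mono fun x hx => hx.trans hy⟩
  filter_upwards [hf, h.eventually_gt_atTop (φ y)] with x hxb hx
  exact hφ.reflect_lt hy hxb hx

end MonotoneReflection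

section Linearization

variable {b φ f g : ℝ → ℝ} {d b' s : ℝ}

theorem hasDerivAt_comp_of_hasDerivAt_mul_div
    (hφ : HasDerivAt φ (d * φ (f s) / b (f s)) (f s)) (hf : HasDerivAt f (g s) s) :
    HasDerivAt (φ ∘ f) (d * (φ (f s) * g s / b (f s))) s :=
  (hφ.comp s hf).congr_deriv (by ring)

theorem hasDerivAt_mul_div_of_grimReaper
    (hφ : HasDerivAt φ (d * φ (f s) / b (f s)) (f s)) (hb : HasDerivAt b b' (f s))
    (hb0 : b (f s) ≠ 0) (hf : HasDerivAt f (g s) s)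
    (hg : HasDerivAt g
      ((1 - g s ^ 2 / b (f s) ^ 2) * b (f s) * d + b' / b (f s) * g s ^ 2) s) :
    HasDerivAt (fun t => φ (f t) * g t / b (f t)) (d * φ (f s)) s := by
  refine (((hφ.comp s hf).mul hg).div (hb.comp s hf) hb0).congr_deriv ?_
  simp only [Pi.mul_apply, Function.comp_apply]
  field_simp
  ring

end Linearization

section TypeIII

variable {n : ℕ} {c : ℝ}

theorem differentiable_bIII : Differentiable ℝ (bIII n c) := by
  have htanh : Differentiable ℝ Real.tanh := by
    simp only [funext Real.tanh_eq_sinh_div_cosh]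
    exact Real.differentiable_sinh.div Real.differentiable_cosh fun y => (Real.cosh_pos y).ne'
  exact ((htanh.comp (differentiable_id.const_mul c)).const_mul _).neg

theorem bIII_eq_sinh_div_cosh (y : ℝ) :
    bIII n c y = n * c * Real.sinh (-(c * y)) / Real.cosh (-(c * y)) := by
  simp only [bIII, Real.tanh_eq_sinh_div_cosh, Real.sinh_neg, Real.cosh_neg]
  ring

theorem sinh_neg_mul_pos (hc : 0 < c) {y : ℝ} (hy : y < 0) : 0 < Real.sinh (-(c * y)) :=
  Real.sinh_pos_iff.2 (neg_pos.2 (mul_neg_of_pos_of_neg hc hy))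

theorem bIII_pos (hn : n ≠ 0) (hc : 0 < c) {y : ℝ} (hy : y < 0) : 0 < bIII n c y := by
  have hsinh := sinh_neg_mul_pos hc hy
  rw [bIII_eq_sinh_div_cosh]
  positivity

/-- The function `φ y = csch (-c y) ^ n`, the positive solution on `(-∞, 0)`, unique up to scaling,
of the equation `φ' = d_III φ / b_III`; composing with it linearizes the type III Grim Reaper
ODE. -/
noncomputable def linearizerIII (n : ℕ) (c y : ℝ) : ℝ := (Real.sinh (-(c * y)))⁻¹ ^ n

theorem linearizerIII_pos (hc : 0 < c) {y : ℝ} (hy : y < 0) : 0 < linearizerIII n c y :=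
  pow_pos (inv_pos.2 (sinh_neg_mul_pos hc hy)) n

theorem monotoneOn_linearizerIII (hc : 0 < c) : MonotoneOn (linearizerIII n c) (Iio 0) := by
  intro y hy z hz hyz
  have hsinh : Real.sinh (-(c * z)) ≤ Real.sinh (-(c * y)) :=
    Real.sinh_le_sinh.2 (neg_le_neg (mul_le_mul_of_nonneg_left hyz hc.le))
  exact pow_le_pow_left₀ (inv_pos.2 (sinh_neg_mul_pos hc hy)).le
    (inv_anti₀ (sinh_neg_mul_pos hc hz) hsinh) n

theorem hasDerivAt_linearizerIII (hc : 0 < c) {y : ℝ} (hy : y < 0) :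
    HasDerivAt (linearizerIII n c) (c ^ 2 * n ^ 2 * linearizerIII n c y / bIII n c y) y := by
  have hsinh := (sinh_neg_mul_pos hc hy).ne'
  have hcosh := (Real.cosh_pos (-(c * y))).ne'
  have hderiv : HasDerivAt (fun t => Real.sinh (-(c * t))) (Real.cosh (-(c * y)) * -c) y := by
    simpa using ((hasDerivAt_id y).const_mul c).neg.sinh
  refine ((hderiv.inv hsinh).pow n).congr_deriv ?_
  rw [bIII_eq_sinh_div_cosh, linearizerIII]
  cases n with
  | zero => simp
  | succ m =>
    simp only [Pi.inv_apply, Nat.add_sub_cancel, pow_succ _ m]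
    field_simp

namespace IsGrimReaperSolIII

variable {f : ℝ → ℝ} {L : Set ℝ} {s : ℝ}

theorem hasDerivAt (h : IsGrimReaperSolIII n c f L) (hL : IsOpen L) (hs : s ∈ L) :
    HasDerivAt f (deriv f s) s :=
  ((h.2.1.differentiableOn two_ne_zero).differentiableAt (hL.mem_nhds hs)).hasDerivAt

theorem hasDerivAt_deriv (h : IsGrimReaperSolIII n c f L) (hL : IsOpen L) (hs : s ∈ L) :
    HasDerivAt (deriv f)
      ((1 - deriv f s ^ 2 / bIII n c (f s) ^ 2) * bIII n c (f s) * (c ^ 2 * n ^ 2)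
        + deriv (bIII n c) (f s) / bIII n c (f s) * deriv f s ^ 2) s := by
  have hC1 : ContDiffOn ℝ 1 (deriv f) L := h.2.1.deriv_of_isOpen hL (by norm_num)
  rw [← h.2.2 s hs]
  exact ((hC1.differentiableOn one_ne_zero).differentiableAt (hL.mem_nhds hs)).hasDerivAt

theorem comp_neg (h : IsGrimReaperSolIII n c f L) :
    IsGrimReaperSolIII n c (fun s => f (-s)) (Neg.neg ⁻¹' L) := by
  refine ⟨fun s hs => h.1 (-s) hs, h.2.1.comp contDiff_neg.contDiffOn fun s hs => hs,
    fun s hs => ?_⟩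
  have hderiv : deriv (fun t => f (-t)) = fun t => -deriv f (-t) :=
    funext (deriv_comp_neg f)
  rw [hderiv, deriv.fun_neg, deriv_comp_neg, neg_neg, neg_sq]
  exact h.2.2 (-s) hs

theorem tendsto_linearizerIII_comp (h : IsGrimReaperSolIII n c f L) (hn : n ≠ 0) (hc : 0 < c)
    (hL : IsOpen L) (hLtop : L ∈ atTop) :
    Tendsto (linearizerIII n c ∘ f) atTop (𝓝 0) ∨ Tendsto (linearizerIII n c ∘ f) atTop atTop := by
  have hd : 0 < c ^ 2 * (n : ℝ) ^ 2 := by positivity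
  refine (tendsto_atBot_or_zero_or_atTop_of_hasDerivAt hd
    (v := fun t => linearizerIII n c (f t) * deriv f t / bIII n c (f t)) ?_ ?_).resolve_left ?_
  · filter_upwards [hLtop] with s hs
    exact hasDerivAt_comp_of_hasDerivAt_mul_div (hasDerivAt_linearizerIII hc (h.1 s hs))
      (h.hasDerivAt hL hs)
  · filter_upwards [hLtop] with s hs
    exact hasDerivAt_mul_div_of_grimReaper (hasDerivAt_linearizerIII hc (h.1 s hs))
      (differentiable_bIII (f s)).hasDerivAt (bIII_pos hn hc (h.1 s hs)).ne'
      (h.hasDerivAt hL hs) (h.hasDerivAt_deriv hL hs)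
  · intro hbot
    obtain ⟨s, hneg, hs⟩ := ((hbot.eventually_lt_atBot 0).and hLtop).exists
    exact (linearizerIII_pos hc (h.1 s hs)).not_gt hneg

theorem tendsto_atTop (h : IsGrimReaperSolIII n c f L) (hn : n ≠ 0) (hc : 0 < c)
    (hL : IsOpen L) (hLtop : L ∈ atTop) :
    Tendsto f atTop (𝓝 0) ∨ Tendsto f atTop atBot := by
  have hneg : ∀ᶠ s in atTop, f s < 0 := mem_of_superset hLtop h.1
  rcases h.tendsto_linearizerIII_comp hn hc hL hLtop with hzero | htop
  · exact Or.inr (tendsto_atBot_of_tendsto_monotoneOn_comp (monotoneOn_linearizerIII hc)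
      (fun y hy => linearizerIII_pos hc hy) hneg hzero)
  · exact Or.inl (tendsto_nhds_of_tendsto_monotoneOn_comp_atTop (monotoneOn_linearizerIII hc)
      hneg htop)

theorem tendsto_atBot (h : IsGrimReaperSolIII n c f L) (hn : n ≠ 0) (hc : 0 < c)
    (hL : IsOpen L) (hLbot : L ∈ atBot) :
    Tendsto f atBot (𝓝 0) ∨ Tendsto f atBot atBot := by
  have hreflected := h.comp_neg.tendsto_atTop hn hc (hL.preimage continuous_neg)
    (tendsto_neg_atTop_atBot hLbot)
  have hunreflect {l : Filter ℝ} (ht : Tendsto (fun s => f (-s)) atTop l) : Tendsto f atBot l := by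
    simpa only [Function.comp_def, neg_neg] using ht.comp tendsto_neg_atBot_atTop
  exact hreflected.imp hunreflect hunreflect

end IsGrimReaperSolIII

end TypeIII

/-- A solution of the type III Grim Reaper ODE defined on `(a, +∞)`
(with `a ∈ ℝ ∪ {-∞}`) tends either to `0` or to `-∞` as `s → +∞`; likewise at `-∞`
for a solution defined on `(-∞, a)`. -/
theorem grimReaperIII_limit_at_infinity (n : ℕ) (hn : 1 ≤ n) (c : ℝ) (hc : 0 < c) :
    (∀ (a : EReal), a ≠ ⊤ → ∀ f : ℝ → ℝ,
      IsGrimReaperSolIII n c f {s : ℝ | a < (s : EReal)} →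
      Filter.Tendsto f Filter.atTop (𝓝 0) ∨
        Filter.Tendsto f Filter.atTop Filter.atBot) ∧
    (∀ (a : EReal), a ≠ ⊥ → ∀ f : ℝ → ℝ,
      IsGrimReaperSolIII n c f {s : ℝ | (s : EReal) < a} →
      Filter.Tendsto f Filter.atBot (𝓝 0) ∨
        Filter.Tendsto f Filter.atBot Filter.atBot) := by
  have hn0 : n ≠ 0 := Nat.one_le_iff_ne_zero.1 hn
  refine ⟨fun a ha f h => ?_, fun a ha f h => ?_⟩
  · exact h.tendsto_atTop hn0 hc (isOpen_Ioi.preimage continuous_coe_real_ereal)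
      (EReal.tendsto_coe_atTop (Ioi_mem_nhds ha.lt_top))
  · exact h.tendsto_atBot hn0 hc (isOpen_Iio.preimage continuous_coe_real_ereal)
      (EReal.tendsto_coe_atBot (Iio_mem_nhds ha.bot_lt))
end
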